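/- arXiv:2202.11747 — 2 statements merged into one kernel-verified Lean document; each statement's English description precedes it below -/
import Mathlib

section
/- Let s ≥ 1 be an integer, f : ℝ → ℝ a probability density (nonnegative, integrable, ∫_ℝ f = 1) that is s-times continuously differentiable with f^{(j)} bounded for every 0 ≤ j ≤ s, and let F(a) = ∫_{−∞}^a f(y) dy be its cumulative distribution function. Let k : ℝ → ℝ be integrable with ∫_ℝ k(z) dz = 1, ∫_ℝ z^j k(z) dz = 0 for j = 1, …, s, and ∫_ℝ |z|^{s+1} |k(z)| dz < ∞, and set K̄(u) = ∫_{−∞}^u k(v) dv. Then for every a ∈ ℝ and h > 0, | ∫_ℝ K̄((a−y)/h) f(y) dy − F(a) | ≤ (sup_{u∈ℝ} |f^{(s)}(u)| / (s+1)!) · (∫_ℝ |z|^{s+1} |k(z)| dz) · h^{s+1}. -/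
open MeasureTheory Set

/-! Write `F` for the primitive of `f` vanishing at `-∞`. Fubini's theorem turns the smoothed
distribution function `∫ K̄((a - y) / h) f(y) dy` into the average `∫ k(z) F(a - h z) dz` of `F`
against the kernel. Expand `F` to order `s` at `a`: the vanishing moments make `k` reproduce the
Taylor polynomial at `a`, leaving `F(a)`, and the Taylor remainder is at most
`sup |f⁽ˢ⁾| / (s + 1)! · (h |z|)^(s + 1)` because `F⁽ˢ⁺¹⁾ = f⁽ˢ⁾`. -/

section Taylor

variable {E : Type*} [NormedAddCommGroup E] [NormedSpace ℝ E] {f : ℝ → E} {n : ℕ} {x₀ x : ℝ}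

lemma taylorWithinEval_eq_univ {s : Set ℝ} (hs : UniqueDiffOn ℝ s) (hx₀ : x₀ ∈ s)
    (hf : ContDiffAt ℝ n f x₀) : taylorWithinEval f n s x₀ x = taylorWithinEval f n univ x₀ x := by
  simp only [taylor_within_apply, iteratedDerivWithin_univ]
  refine Finset.sum_congr rfl fun j hj => ?_
  have hjn : j ≤ n := Nat.lt_succ_iff.1 (Finset.mem_range.1 hj)
  rw [iteratedDerivWithin_eq_iteratedDeriv hs (hf.of_le (mod_cast hjn)) hx₀]

lemma smul_taylorWithinEval_univ_sub_mul (r h z : ℝ) :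
    r • taylorWithinEval f n univ x₀ (x₀ - h * z) =
      ∑ j ∈ Finset.range (n + 1),
        (z ^ j * r) • ((j.factorial : ℝ)⁻¹ * (-h) ^ j) • iteratedDeriv j f x₀ := by
  simp only [taylor_within_apply, iteratedDerivWithin_univ, Finset.smul_sum, smul_smul]
  congr! 2 with j
  rw [show x₀ - h * z - x₀ = -h * z by ring, mul_pow]
  ring

lemma norm_sub_taylorWithinEval_univ_le [CompleteSpace E] {M : ℝ} (hf : ContDiff ℝ (n + 1 : ℕ) f)
    (hM : ∀ t ∈ uIcc x₀ x, ‖iteratedDeriv (n + 1) f t‖ ≤ M) :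
    ‖f x - taylorWithinEval f n univ x₀ x‖ ≤ M / (n + 1).factorial * |x - x₀| ^ (n + 1) := by
  rcases eq_or_ne x₀ x with rfl | hne
  · simp
  have hunique := uniqueDiffOn_uIcc hne
  rw [← taylorWithinEval_eq_univ hunique left_mem_uIcc
      (hf.of_le (mod_cast n.le_succ)).contDiffAt, taylor_integral_remainder hf.contDiffOn]
  have hbound : ∀ t ∈ uIoc x₀ x,
      ‖((x - t) ^ n / n.factorial) • iteratedDerivWithin (n + 1) f (uIcc x₀ x) t‖ ≤
        M / n.factorial * |t - x| ^ n := by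
    intro t ht
    have ht' := uIoc_subset_uIcc ht
    rw [iteratedDerivWithin_eq_iteratedDeriv hunique hf.contDiffAt ht', norm_smul, norm_div,
      norm_pow, Real.norm_eq_abs, Real.norm_natCast, abs_sub_comm, div_mul_comm, div_eq_mul_inv,
      div_eq_mul_inv]
    gcongr
    exact hM t ht'
  calc ‖∫ t in x₀..x, ((x - t) ^ n / n.factorial) • iteratedDerivWithin (n + 1) f (uIcc x₀ x) t‖
      ≤ |∫ t in x₀..x, M / n.factorial * |t - x| ^ n| :=
        intervalIntegral.norm_integral_le_abs_of_norm_le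
          (ae_restrict_of_forall_mem measurableSet_uIoc hbound)
          (Continuous.intervalIntegrable (by fun_prop) _ _)
    _ = |M / n.factorial| * |∫ t in uIoc x x₀, |t - x| ^ n| := by
        rw [intervalIntegral.integral_const_mul, abs_mul,
          intervalIntegral.abs_intervalIntegral_eq, uIoc_comm]
    _ = M / (n + 1).factorial * |x - x₀| ^ (n + 1) := by
        have hM0 : 0 ≤ M := (norm_nonneg _).trans (hM x₀ left_mem_uIcc)
        rw [integral_pow_abs_sub_uIoc, abs_of_nonneg (by positivity), abs_of_nonneg (by positivity),
          abs_sub_comm, Nat.factorial_succ]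
        push_cast
        field_simp

end Taylor

section Primitive

variable {E : Type*} [NormedAddCommGroup E] [NormedSpace ℝ E] [CompleteSpace E] {f : ℝ → E}

lemma hasDerivAt_setIntegral_Iic (hfi : Integrable f) {x : ℝ} (hf : ContinuousAt f x) :
    HasDerivAt (fun a => ∫ y in Iic a, f y) (f x) x := by
  have hsplit : (fun a => ∫ y in Iic a, f y) =
      fun a => (∫ y in Iic x, f y) + ∫ y in x..a, f y := by
    ext a
    rw [← intervalIntegral.integral_Iic_sub_Iic hfi.integrableOn hfi.integrableOn,
      add_sub_cancel]
  rw [hsplit]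
  exact (intervalIntegral.integral_hasDerivAt_right .refl
    hfi.aestronglyMeasurable.stronglyMeasurableAtFilter hf).const_add _

lemma deriv_setIntegral_Iic (hfi : Integrable f) (hf : Continuous f) :
    deriv (fun a => ∫ y in Iic a, f y) = f :=
  funext fun _ => (hasDerivAt_setIntegral_Iic hfi hf.continuousAt).deriv

lemma contDiff_succ_setIntegral_Iic {n : ℕ} (hfi : Integrable f) (hf : ContDiff ℝ n f) :
    ContDiff ℝ (n + 1 : ℕ) fun a => ∫ y in Iic a, f y := by
  push_cast
  refine contDiff_succ_iff_deriv.2 ⟨fun x =>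
    (hasDerivAt_setIntegral_Iic hfi hf.continuous.continuousAt).differentiableAt, by simp, ?_⟩
  rwa [deriv_setIntegral_Iic hfi hf.continuous]

lemma integral_setIntegral_Iic_div_smul {k : ℝ → ℝ} {μ ν : Measure ℝ} [SFinite μ] [SFinite ν]
    (hf : Integrable f μ) (hk : Integrable k ν) (a : ℝ) {h : ℝ} (hh : 0 < h) :
    ∫ y, (∫ v in Iic ((a - y) / h), k v ∂ν) • f y ∂μ =
      ∫ v, k v • ∫ y in Iic (a - h * v), f y ∂μ ∂ν := by
  let S : Set (ℝ × ℝ) := {p | p.2 ≤ (a - p.1) / h}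
  have hS : MeasurableSet S := measurableSet_le (by fun_prop) (by fun_prop)
  have hSint : Integrable (S.indicator fun p => k p.2 • f p.1) (μ.prod ν) :=
    (hk.smul_prod hf).swap.indicator hS
  calc ∫ y, (∫ v in Iic ((a - y) / h), k v ∂ν) • f y ∂μ
      = ∫ y, ∫ v, S.indicator (fun p => k p.2 • f p.1) (y, v) ∂ν ∂μ := by
        congr! 2 with y
        rw [← integral_smul_const, ← integral_indicator measurableSet_Iic]
        rfl
    _ = ∫ v, ∫ y, S.indicator (fun p => k p.2 • f p.1) (y, v) ∂μ ∂ν :=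
        integral_integral_swap hSint
    _ = ∫ v, k v • ∫ y in Iic (a - h * v), f y ∂μ ∂ν := by
        congr! 2 with v
        rw [← integral_smul, ← integral_indicator measurableSet_Iic]
        congr! 2 with y
        have hmem : (y, v) ∈ S ↔ y ∈ Iic (a - h * v) := by
          simp only [S, mem_ofPred_eq, mem_Iic, le_div_iff₀' hh, le_sub_comm]
        simp only [indicator, hmem]

end Primitive

lemma integrable_pow_mul_of_le {k : ℝ → ℝ} {μ : Measure ℝ} {m n : ℕ} (hmn : m ≤ n)
    (hk : Integrable k μ) (hkn : Integrable (fun z => |z| ^ n * |k z|) μ) :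
    Integrable (fun z => z ^ m * k z) μ := by
  refine (hk.abs.add hkn).mono' (by fun_prop) (.of_forall fun z => ?_)
  have hpow : |z| ^ m ≤ 1 + |z| ^ n := by
    rcases le_total |z| 1 with hz | hz
    · exact (pow_le_one₀ (abs_nonneg z) hz).trans (le_add_of_nonneg_right (by positivity))
    · exact (pow_le_pow_right₀ hz hmn).trans (le_add_of_nonneg_left zero_le_one)
  calc ‖z ^ m * k z‖ = |z| ^ m * |k z| := by simp only [norm_mul, norm_pow, Real.norm_eq_abs]
    _ ≤ (1 + |z| ^ n) * |k z| := by gcongr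
    _ = |k z| + |z| ^ n * |k z| := by ring

/-- `k` is a smoothing kernel of order `n`, as in kernel estimation: it has unit mass, its moments
of orders `1, …, n - 1` vanish and its absolute moment of order `n` is finite. The kernel may take
negative values, and its `n`-th moment is allowed to vanish. -/
structure IsKernelOfOrder (n : ℕ) (k : ℝ → ℝ) : Prop where
  integrable : Integrable k
  integral_eq_one : ∫ z, k z = 1
  integral_pow_mul_eq_zero : ∀ j, 1 ≤ j → j < n → ∫ z, z ^ j * k z = 0
  integrable_abs_pow_mul_abs : Integrable fun z => |z| ^ n * |k z|

namespace IsKernelOfOrder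

variable {E : Type*} [NormedAddCommGroup E] [NormedSpace ℝ E] {k : ℝ → ℝ} {n : ℕ}

lemma integrable_pow_mul (hk : IsKernelOfOrder n k) {j : ℕ} (hj : j ≤ n) :
    Integrable fun z => z ^ j * k z :=
  integrable_pow_mul_of_le hj hk.integrable hk.integrable_abs_pow_mul_abs

lemma integrable_smul_taylorWithinEval (hk : IsKernelOfOrder (n + 1) k) (G : ℝ → E) (a h : ℝ) :
    Integrable fun z => k z • taylorWithinEval G n univ a (a - h * z) := by
  simp only [smul_taylorWithinEval_univ_sub_mul]
  exact integrable_finsetSum _ fun j hj =>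
    (hk.integrable_pow_mul (Finset.mem_range.1 hj).le).smul_const _

lemma integral_smul_taylorWithinEval [CompleteSpace E] (hk : IsKernelOfOrder (n + 1) k)
    (G : ℝ → E) (a h : ℝ) : ∫ z, k z • taylorWithinEval G n univ a (a - h * z) = G a := by
  simp only [smul_taylorWithinEval_univ_sub_mul]
  rw [integral_finsetSum _ fun j hj =>
    (hk.integrable_pow_mul (Finset.mem_range.1 hj).le).smul_const _,
    Finset.sum_range_succ', Finset.sum_eq_zero]
  · simp [integral_smul_const, hk.integral_eq_one]
  · intro j hj
    rw [integral_smul_const, hk.integral_pow_mul_eq_zero _ (by omega)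
      (Nat.succ_lt_succ (Finset.mem_range.1 hj)), zero_smul]

theorem norm_integral_smul_comp_sub_le [CompleteSpace E] (hk : IsKernelOfOrder (n + 1) k)
    {G : ℝ → E} {M : ℝ} (hG : ContDiff ℝ (n + 1 : ℕ) G)
    (hM : ∀ u, ‖iteratedDeriv (n + 1) G u‖ ≤ M) (a h : ℝ) :
    ‖(∫ z, k z • G (a - h * z)) - G a‖ ≤
      M / (n + 1).factorial * (∫ z, |z| ^ (n + 1) * |k z|) * |h| ^ (n + 1) := by
  let T (z : ℝ) : E := taylorWithinEval G n univ a (a - h * z)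
  have hTint : Integrable fun z => k z • T z := hk.integrable_smul_taylorWithinEval G a h
  have hT : ∫ z, k z • T z = G a := hk.integral_smul_taylorWithinEval G a h
  let C : ℝ := M / (n + 1).factorial * |h| ^ (n + 1)
  have hrem (z : ℝ) : ‖k z • (G (a - h * z) - T z)‖ ≤ C * (|z| ^ (n + 1) * |k z|) :=
    calc ‖k z • (G (a - h * z) - T z)‖ = |k z| * ‖G (a - h * z) - T z‖ := norm_smul _ _
      _ ≤ |k z| * (M / (n + 1).factorial * |a - h * z - a| ^ (n + 1)) := by
          gcongr
          exact norm_sub_taylorWithinEval_univ_le hG fun t _ => hM t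
      _ = C * (|z| ^ (n + 1) * |k z|) := by
          rw [sub_sub_cancel_left, abs_neg, abs_mul, mul_pow]
          ring
  have hremInt := hk.integrable_abs_pow_mul_abs.const_mul C
  have hGTint : Integrable fun z => k z • (G (a - h * z) - T z) := by
    refine hremInt.mono' ?_ (.of_forall hrem)
    have hGm : AEStronglyMeasurable fun z => k z • G (a - h * z) :=
      hk.integrable.aestronglyMeasurable.smul
        (hG.continuous.comp (by fun_prop)).aestronglyMeasurable
    simp only [smul_sub]
    exact hGm.sub hTint.aestronglyMeasurable
  have hsplit : ∫ z, k z • G (a - h * z) = (∫ z, k z • (G (a - h * z) - T z)) + G a := by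
    rw [← hT, ← integral_add hGTint hTint]
    simp only [smul_sub, sub_add_cancel]
  calc ‖(∫ z, k z • G (a - h * z)) - G a‖ = ‖∫ z, k z • (G (a - h * z) - T z)‖ := by
        rw [hsplit, add_sub_cancel_right]
    _ ≤ ∫ z, C * (|z| ^ (n + 1) * |k z|) :=
        norm_integral_le_of_norm_le hremInt (.of_forall hrem)
    _ = M / (n + 1).factorial * (∫ z, |z| ^ (n + 1) * |k z|) * |h| ^ (n + 1) := by
        rw [integral_const_mul]
        ring

end IsKernelOfOrder

theorem stmt_3_general {E : Type*} [NormedAddCommGroup E] [NormedSpace ℝ E] [CompleteSpace E]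
    {s : ℕ} {f : ℝ → E} {k : ℝ → ℝ} {M : ℝ} (hfi : Integrable f) (hf : ContDiff ℝ s f)
    (hM : ∀ u, ‖iteratedDeriv s f u‖ ≤ M) (hk : IsKernelOfOrder (s + 1) k) (a : ℝ) {h : ℝ}
    (hh : 0 < h) :
    ‖(∫ y, (∫ v in Iic ((a - y) / h), k v) • f y) - ∫ y in Iic a, f y‖ ≤
      M / (s + 1).factorial * (∫ z, |z| ^ (s + 1) * |k z|) * h ^ (s + 1) := by
  have hderiv (u : ℝ) : ‖iteratedDeriv (s + 1) (fun b => ∫ y in Iic b, f y) u‖ ≤ M := by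
    rw [iteratedDeriv_succ', deriv_setIntegral_Iic hfi hf.continuous]
    exact hM u
  rw [integral_setIntegral_Iic_div_smul hfi hk.integrable a hh]
  simpa only [abs_of_pos hh] using
    hk.norm_integral_smul_comp_sub_le (contDiff_succ_setIntegral_Iic hfi hf) hderiv a h

/-- O(h^{s+1}) bias bound for the kernel-smoothed CDF: with f a C^s probability
density with bounded derivatives, F its CDF, k a kernel with unit mass, vanishing
moments of orders 1,…,s and finite (s+1)-th absolute moment, and K̄ the integrated
kernel, | ∫ K̄((a−y)/h) f(y) dy − F(a) | ≤ (sup|f^{(s)}|/(s+1)!) ∫|z|^{s+1}|k| · h^{s+1}. -/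
theorem stmt_3 (s : ℕ) (hs : 1 ≤ s) (f k : ℝ → ℝ)
    (hf0 : ∀ y, 0 ≤ f y) (hfi : Integrable f) (hf1 : (∫ y, f y) = 1)
    (hf : ContDiff ℝ s f)
    (hfb : ∀ j ≤ s, ∃ M : ℝ, ∀ x, |iteratedDeriv j f x| ≤ M)
    (F : ℝ → ℝ) (hF : ∀ a, F a = ∫ y in Set.Iic a, f y)
    (hk : Integrable k)
    (hk1 : (∫ z, k z) = 1)
    (hkmom : ∀ j, 1 ≤ j → j ≤ s → (∫ z, z ^ j * k z) = 0)
    (hks1 : Integrable (fun z => |z| ^ (s + 1) * |k z|))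
    (Kbar : ℝ → ℝ) (hKbar : ∀ u, Kbar u = ∫ v in Set.Iic u, k v) :
    ∀ (a h : ℝ), 0 < h →
      |(∫ y, Kbar ((a - y) / h) * f y) - F a| ≤
        ((⨆ u : ℝ, |iteratedDeriv s f u|) / (Nat.factorial (s + 1))) *
          (∫ z, |z| ^ (s + 1) * |k z|) * h ^ (s + 1) := by
  intro a h hh
  obtain ⟨B, hB⟩ := hfb s le_rfl
  have hM := le_ciSup (f := fun u => |iteratedDeriv s f u|) ⟨B, forall_mem_range.2 hB⟩
  have hkernel : IsKernelOfOrder (s + 1) k :=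
    ⟨hk, hk1, fun j hj hjs => hkmom j hj (Nat.lt_succ_iff.1 hjs), hks1⟩
  simpa only [hF, hKbar, smul_eq_mul, Real.norm_eq_abs] using
    stmt_3_general hfi hf hM hkernel a hh
end

section
/- Let k : ℝ → ℝ be an even integrable function with ∫_ℝ k(z) dz = 1 and ∫_ℝ |z k(z)| dz < ∞, and set K̄(u) = ∫_{−∞}^u k(v) dv and K*(z) = 2 k(z) K̄(z). Then ∫_ℝ z K*(z) dz = 2 ∫_0^∞ K̄(z) (1 − K̄(z)) dz, and both integrals are absolutely convergent. -/
open MeasureTheory Set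

/-!
The map `z ↦ K̄(z)²` is a primitive of `K* = 2 k K̄`, because the double integral of `k ⊗ k` over a
square is twice the one over its lower triangle. Slicing the factor `z` as `∫ 1_{0 < t < z} dt` for
`z > 0`, and likewise for `z < 0`, turns the first moment of `K*` into the integral over `t > 0` of
`∫_{(t, ∞)} K* - ∫_{(-∞, -t)} K* = (m² - K̄(t)²) - K̄(-t)²`, where `m = ∫ k`. Since `k` is even,
`K̄(-t) = m - K̄(t)`, so the integrand is `2 K̄(t) (m - K̄(t))`.
-/

section LayerCake

variable {α E : Type*} [MeasurableSpace α] {μ : Measure α} [NormedAddCommGroup E]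
  [NormedSpace ℝ E] {X : α → ℝ} {g : α → E}

theorem setIntegral_Ioi_zero_indicator_Iio_const [CompleteSpace E] (x : ℝ) (c : E) :
    ∫ t in Ioi (0 : ℝ), (Iio x).indicator (fun _ => c) t = x⁺ • c := by
  rw [integral_indicator_const c measurableSet_Iio, measureReal_restrict_apply measurableSet_Iio,
    inter_comm, Ioi_inter_Iio, Real.volume_real_Ioo, sub_zero, posPart_def]

theorem integrable_indicator_Iio_prod [SFinite μ] (hX : Measurable X)
    (hg : AEStronglyMeasurable g μ) (hXg : Integrable (fun a => (X a)⁺ • g a) μ) :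
    Integrable (fun p : ℝ × α => (Iio (X p.2)).indicator (fun _ => g p.2) p.1)
      ((volume.restrict (Ioi 0)).prod μ) := by
  have hmeas : MeasurableSet {p : ℝ × α | p.1 < X p.2} :=
    measurableSet_lt measurable_fst (hX.comp measurable_snd)
  refine (integrable_prod_iff' (hg.comp_snd.indicator hmeas)).2 ⟨ae_of_all _ fun a => ?_, ?_⟩
  · change Integrable ((Iio (X a)).indicator fun _ => g a) _
    rw [integrable_indicator_iff measurableSet_Iio, IntegrableOn,
      Measure.restrict_restrict measurableSet_Iio, inter_comm, Ioi_inter_Iio]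
    exact integrableOn_const measure_Ioo_lt_top.ne
  · refine hXg.norm.congr (ae_of_all _ fun a => ?_)
    calc ‖(X a)⁺ • g a‖ = (X a)⁺ • ‖g a‖ := by
          rw [norm_smul, Real.norm_of_nonneg (posPart_nonneg _), smul_eq_mul]
      _ = ∫ t in Ioi (0 : ℝ), (Iio (X a)).indicator (fun _ => ‖g a‖) t :=
          (setIntegral_Ioi_zero_indicator_Iio_const _ _).symm
      _ = ∫ t in Ioi (0 : ℝ), ‖(Iio (X a)).indicator (fun _ => g a) t‖ := by
          simp only [norm_indicator_eq_indicator_norm]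

theorem integrableOn_setIntegral_lt [SFinite μ] (hX : Measurable X)
    (hg : AEStronglyMeasurable g μ) (hXg : Integrable (fun a => (X a)⁺ • g a) μ) :
    IntegrableOn (fun t => ∫ a in {a | t < X a}, g a ∂μ) (Ioi 0) :=
  (integrable_indicator_Iio_prod hX hg hXg).integral_prod_left.congr <|
    ae_of_all _ fun _ => integral_indicator (measurableSet_lt measurable_const hX)

theorem integral_posPart_smul_eq_integral_setIntegral_lt [SFinite μ] [CompleteSpace E]
    (hX : Measurable X) (hg : AEStronglyMeasurable g μ)
    (hXg : Integrable (fun a => (X a)⁺ • g a) μ) :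
    ∫ a, (X a)⁺ • g a ∂μ = ∫ t in Ioi (0 : ℝ), ∫ a in {a | t < X a}, g a ∂μ := by
  calc ∫ a, (X a)⁺ • g a ∂μ
      = ∫ a, (∫ t in Ioi (0 : ℝ), (Iio (X a)).indicator (fun _ => g a) t) ∂μ := by
        simp only [setIntegral_Ioi_zero_indicator_Iio_const]
    _ = ∫ t in Ioi (0 : ℝ), ∫ a, (Iio (X a)).indicator (fun _ => g a) t ∂μ :=
        (integral_integral_swap (f := fun t a => (Iio (X a)).indicator (fun _ => g a) t)
          (integrable_indicator_Iio_prod hX hg hXg)).symm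
    _ = ∫ t in Ioi (0 : ℝ), ∫ a in {a | t < X a}, g a ∂μ :=
        integral_congr_ae <| ae_of_all _ fun _ =>
          integral_indicator (measurableSet_lt measurable_const hX)

theorem integrable_posPart_smul (hX : Measurable X) (hXg : Integrable (fun a => X a • g a) μ) :
    Integrable (fun a => (X a)⁺ • g a) μ := by
  have hpos : MeasurableSet {a | 0 < X a} := measurableSet_lt measurable_const hX
  refine (hXg.indicator hpos).congr (ae_of_all _ fun a => ?_)
  by_cases ha : 0 < X a
  · simp only [indicator, mem_ofPred_eq, if_pos ha, posPart_of_nonneg ha.le]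
  · simp only [indicator, mem_ofPred_eq, if_neg ha, posPart_of_nonpos (not_lt.1 ha), zero_smul]

theorem integrable_posPart_neg_smul (hX : Measurable X)
    (hXg : Integrable (fun a => X a • g a) μ) : Integrable (fun a => (-X a)⁺ • g a) μ :=
  integrable_posPart_smul hX.neg <| hXg.neg.congr <| ae_of_all _ fun _ => (neg_smul _ _).symm

theorem integrableOn_setIntegral_lt_sub_setIntegral_lt_neg [SFinite μ] (hX : Measurable X)
    (hg : AEStronglyMeasurable g μ) (hXg : Integrable (fun a => X a • g a) μ) :
    IntegrableOn (fun t => (∫ a in {a | t < X a}, g a ∂μ) - ∫ a in {a | t < -X a}, g a ∂μ)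
      (Ioi 0) :=
  (integrableOn_setIntegral_lt hX hg (integrable_posPart_smul hX hXg)).sub
    (integrableOn_setIntegral_lt hX.neg hg (integrable_posPart_neg_smul hX hXg))

theorem integral_smul_eq_integral_setIntegral_lt_sub_setIntegral_lt_neg [SFinite μ]
    [CompleteSpace E] (hX : Measurable X) (hg : AEStronglyMeasurable g μ)
    (hXg : Integrable (fun a => X a • g a) μ) :
    ∫ a, X a • g a ∂μ = ∫ t in Ioi (0 : ℝ),
      ((∫ a in {a | t < X a}, g a ∂μ) - ∫ a in {a | t < -X a}, g a ∂μ) := by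
  have hpos := integrable_posPart_smul hX hXg
  have hneg := integrable_posPart_neg_smul hX hXg
  calc ∫ a, X a • g a ∂μ = ∫ a, ((X a)⁺ • g a - (-X a)⁺ • g a) ∂μ := by
        simp only [← sub_smul, posPart_neg, posPart_sub_negPart]
    _ = (∫ a, (X a)⁺ • g a ∂μ) - ∫ a, (-X a)⁺ • g a ∂μ := integral_sub hpos hneg
    _ = (∫ t in Ioi (0 : ℝ), ∫ a in {a | t < X a}, g a ∂μ) -
          ∫ t in Ioi (0 : ℝ), ∫ a in {a | t < -X a}, g a ∂μ :=
        congrArg₂ _ (integral_posPart_smul_eq_integral_setIntegral_lt hX hg hpos)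
          (integral_posPart_smul_eq_integral_setIntegral_lt hX.neg hg hneg)
    _ = ∫ t in Ioi (0 : ℝ),
          ((∫ a in {a | t < X a}, g a ∂μ) - ∫ a in {a | t < -X a}, g a ∂μ) :=
        (integral_sub (integrableOn_setIntegral_lt hX hg hpos)
          (integrableOn_setIntegral_lt hX.neg hg hneg)).symm

theorem integrableOn_setIntegral_Ioi_sub_setIntegral_Iio_neg {ν : Measure ℝ} [SFinite ν]
    {g : ℝ → E} (hg : AEStronglyMeasurable g ν) (hmoment : Integrable (fun v => v • g v) ν) :
    IntegrableOn (fun t => (∫ v in Ioi t, g v ∂ν) - ∫ v in Iio (-t), g v ∂ν) (Ioi 0) := by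
  simpa only [id, lt_neg] using!
    integrableOn_setIntegral_lt_sub_setIntegral_lt_neg measurable_id hg hmoment

theorem integral_id_smul_eq_integral_setIntegral_Ioi_sub_setIntegral_Iio_neg [CompleteSpace E]
    {ν : Measure ℝ} [SFinite ν] {g : ℝ → E} (hg : AEStronglyMeasurable g ν)
    (hmoment : Integrable (fun v => v • g v) ν) :
    ∫ v, v • g v ∂ν =
      ∫ t in Ioi (0 : ℝ), ((∫ v in Ioi t, g v ∂ν) - ∫ v in Iio (-t), g v ∂ν) := by
  simpa only [id, lt_neg] using!
    integral_smul_eq_integral_setIntegral_lt_sub_setIntegral_lt_neg measurable_id hg hmoment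

end LayerCake

section IteratedIntegral

variable {α 𝕜 : Type*} [LinearOrder α] [TopologicalSpace α] [OrderClosedTopology α]
  [MeasurableSpace α] [OpensMeasurableSpace α] {μ : Measure α} [RCLike 𝕜] {f g : α → 𝕜}

theorem integral_indicator_Iic_mul_right (f g : α → 𝕜) (x : α) :
    ∫ y, (Iic x).indicator (fun y => f x * g y) y ∂μ = f x * ∫ y in Iic x, g y ∂μ := by
  rw [integral_indicator measurableSet_Iic, integral_const_mul]

theorem integral_indicator_Iic_mul_left (f g : α → 𝕜) (y : α) :
    ∫ x, (Iic x).indicator (fun y => f x * g y) y ∂μ = (∫ x in Ici y, f x ∂μ) * g y := by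
  rw [← integral_mul_const, ← integral_indicator measurableSet_Ici]
  rfl

variable [SecondCountableTopology α]

theorem integrable_indicator_Iic_mul_prod (hf : Integrable f μ) (hg : Integrable g μ) :
    Integrable (fun p : α × α => (Iic p.1).indicator (fun y => f p.1 * g y) p.2) (μ.prod μ) :=
  (hf.mul_prod hg).indicator (measurableSet_le measurable_snd measurable_fst)

variable [SFinite μ]

theorem integrable_mul_setIntegral_Iic (hf : Integrable f μ) (hg : Integrable g μ) :
    Integrable (fun x => f x * ∫ y in Iic x, g y ∂μ) μ := by
  simpa only [integral_indicator_Iic_mul_right] using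
    (integrable_indicator_Iic_mul_prod hf hg).integral_prod_left

theorem integral_mul_setIntegral_Iic (hf : Integrable f μ) (hg : Integrable g μ) :
    ∫ x, f x * ∫ y in Iic x, g y ∂μ ∂μ = ∫ y, (∫ x in Ici y, f x ∂μ) * g y ∂μ := by
  simpa only [integral_indicator_Iic_mul_right, integral_indicator_Iic_mul_left] using
    integral_integral_swap (f := fun x y => (Iic x).indicator (fun y => f x * g y) y)
      (integrable_indicator_Iic_mul_prod hf hg)

theorem integral_two_mul_mul_setIntegral_Iic [NullSingletonClass μ] (hf : Integrable f μ) :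
    ∫ x, 2 * f x * ∫ y in Iic x, f y ∂μ ∂μ = (∫ x, f x ∂μ) ^ 2 := by
  have hIci (y : α) : ∫ x in Ici y, f x ∂μ = (∫ x, f x ∂μ) - ∫ x in Iic y, f x ∂μ := by
    rw [← compl_Iio, setIntegral_compl measurableSet_Iio hf, integral_Iic_eq_integral_Iio]
  have hswap : ∫ x, f x * ∫ y in Iic x, f y ∂μ ∂μ =
      (∫ x, f x ∂μ) ^ 2 - ∫ x, f x * ∫ y in Iic x, f y ∂μ ∂μ := by
    calc ∫ x, f x * ∫ y in Iic x, f y ∂μ ∂μ = ∫ y, (∫ x in Ici y, f x ∂μ) * f y ∂μ :=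
          integral_mul_setIntegral_Iic hf hf
      _ = ∫ y, ((∫ x, f x ∂μ) * f y - f y * ∫ x in Iic y, f x ∂μ) ∂μ := by
          simp only [hIci, sub_mul, mul_comm (f _)]
      _ = (∫ x, f x ∂μ) ^ 2 - ∫ x, f x * ∫ y in Iic x, f y ∂μ ∂μ := by
          rw [integral_sub (hf.const_mul _) (integrable_mul_setIntegral_Iic hf hf),
            integral_const_mul, sq]
  simp only [mul_assoc, integral_const_mul]
  linear_combination hswap

theorem setIntegral_Iic_two_mul_mul_setIntegral_Iic [NullSingletonClass μ] {z : α}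
    (hf : IntegrableOn f (Iic z) μ) :
    ∫ x in Iic z, 2 * f x * ∫ y in Iic x, f y ∂μ ∂μ = (∫ x in Iic z, f x ∂μ) ^ 2 := by
  rw [← integral_two_mul_mul_setIntegral_Iic hf]
  refine setIntegral_congr_fun measurableSet_Iic fun x hx => ?_
  simp only [Measure.restrict_restrict_of_subset (Iic_subset_Iic.2 hx)]

theorem integrable_two_mul_mul_setIntegral_Iic (hf : Integrable f μ) :
    Integrable (fun x => 2 * f x * ∫ y in Iic x, f y ∂μ) μ :=
  integrable_mul_setIntegral_Iic (hf.const_mul 2) hf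

theorem setIntegral_Ioi_two_mul_mul_setIntegral_Iic [NullSingletonClass μ] (hf : Integrable f μ)
    (z : α) :
    ∫ x in Ioi z, 2 * f x * ∫ y in Iic x, f y ∂μ ∂μ =
      (∫ x, f x ∂μ) ^ 2 - (∫ x in Iic z, f x ∂μ) ^ 2 := by
  rw [← compl_Iic, setIntegral_compl measurableSet_Iic (integrable_two_mul_mul_setIntegral_Iic hf),
    integral_two_mul_mul_setIntegral_Iic hf,
    setIntegral_Iic_two_mul_mul_setIntegral_Iic hf.integrableOn]

end IteratedIntegral

theorem setIntegral_Iic_neg_of_even {E : Type*} [NormedAddCommGroup E] [NormedSpace ℝ E]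
    {k : ℝ → E} (heven : Function.Even k) (hk : Integrable k) (z : ℝ) :
    ∫ v in Iic (-z), k v = (∫ v, k v) - ∫ v in Iic z, k v := by
  rw [← setIntegral_compl measurableSet_Iic hk, compl_Iic]
  simpa only [heven _, neg_neg] using integral_comp_neg_Iic (-z) k

theorem setIntegral_Ioi_sub_setIntegral_Iio_neg_of_even {𝕜 : Type*} [RCLike 𝕜] {k : ℝ → 𝕜}
    (heven : Function.Even k) (hk : Integrable k) (t : ℝ) :
    (∫ z in Ioi t, 2 * k z * ∫ v in Iic z, k v) - ∫ z in Iio (-t), 2 * k z * ∫ v in Iic z, k v =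
      2 * ((∫ v in Iic t, k v) * ((∫ v, k v) - ∫ v in Iic t, k v)) := by
  rw [setIntegral_Ioi_two_mul_mul_setIntegral_Iic hk, ← integral_Iic_eq_integral_Iio,
    setIntegral_Iic_two_mul_mul_setIntegral_Iic hk.integrableOn,
    setIntegral_Iic_neg_of_even heven hk]
  ring

theorem stmt_6_general {𝕜 : Type*} [RCLike 𝕜] {k : ℝ → 𝕜} (heven : Function.Even k)
    (hk : Integrable k) (hzk : Integrable fun z => z • k z)
    {Kbar : ℝ → 𝕜} (hKbar : ∀ u, Kbar u = ∫ v in Iic u, k v)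
    {Kstar : ℝ → 𝕜} (hKstar : ∀ z, Kstar z = 2 * k z * Kbar z) :
    Integrable (fun z => z • Kstar z) ∧
    IntegrableOn (fun z => Kbar z * ((∫ v, k v) - Kbar z)) (Ioi 0) ∧
    ∫ z, z • Kstar z = 2 * ∫ z in Ioi (0 : ℝ), Kbar z * ((∫ v, k v) - Kbar z) := by
  simp only [hKstar, hKbar]
  have hmeas := (integrable_two_mul_mul_setIntegral_Iic hk).aestronglyMeasurable
  have hmoment : Integrable fun z => z • (2 * k z * ∫ v in Iic z, k v) := by
    simpa only [mul_smul_comm, smul_mul_assoc] using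
      integrable_mul_setIntegral_Iic (hzk.const_mul 2) hk
  have htails := integrableOn_setIntegral_Ioi_sub_setIntegral_Iio_neg hmeas hmoment
  have hlayers :=
    integral_id_smul_eq_integral_setIntegral_Ioi_sub_setIntegral_Iio_neg hmeas hmoment
  simp only [setIntegral_Ioi_sub_setIntegral_Iio_neg_of_even heven hk] at htails hlayers
  rw [integral_const_mul] at hlayers
  exact ⟨hmoment, (integrable_const_mul_iff (IsUnit.mk0 _ two_ne_zero) _).1 htails, hlayers⟩

/-- For an even integrable kernel k with unit mass and finite first absolute
moment, with K̄(u) = ∫_{−∞}^u k and K*(z) = 2 k(z) K̄(z):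
∫ z K*(z) dz = 2 ∫_0^∞ K̄(z)(1 − K̄(z)) dz, both integrals being absolutely
convergent. -/
theorem stmt_6 (k : ℝ → ℝ) (hke : ∀ z, k (-z) = k z) (hk : Integrable k)
    (hk1 : (∫ z, k z) = 1)
    (hk2 : Integrable (fun z => |z * k z|))
    (Kbar : ℝ → ℝ) (hKbar : ∀ u, Kbar u = ∫ v in Set.Iic u, k v)
    (Kstar : ℝ → ℝ) (hKstar : ∀ z, Kstar z = 2 * k z * Kbar z) :
    Integrable (fun z => z * Kstar z) ∧
    IntegrableOn (fun z => Kbar z * (1 - Kbar z)) (Set.Ioi (0:ℝ)) ∧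
    (∫ z, z * Kstar z) = 2 * ∫ z in Set.Ioi (0:ℝ), Kbar z * (1 - Kbar z) := by
  have hzk : Integrable fun z => z • k z := (integrable_norm_iff (by fun_prop)).1 hk2
  simpa only [hk1, smul_eq_mul] using stmt_6_general hke hk hzk hKbar hKstar
end
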